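/- Let S = {1,3,5,7,9,11,13,19}. For every integer k with 0 ≤ k ≤ 7, one has s̃(2^{27−3k}−8, S) = 8−k, and every (2^{27−3k}−8)-tiling sequence (b_1,ℓ_1),…,(b_{8−k},ℓ_{8−k}) with tiles in S of minimal length 8−k satisfies one of the following: (a) (b_{8−k},ℓ_{8−k}) = (24−3k, 7); (b) (b_{8−k},ℓ_{8−k}) = (23−3k, 13) and (b_{7−k},ℓ_{7−k}) = (21−3k, 11); (c) (b_{8−k},ℓ_{8−k}) = (23−3k, 11) and (b_{7−k},ℓ_{7−k}) = (21−3k, 19); (d) (b_{8−k},ℓ_{8−k}) = (23−3k, 13), (b_{7−k},ℓ_{7−k}) = (20−3k, 19) and (b_{6−k},ℓ_{6−k}) = (18−3k, 19). -/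

import Mathlib

open scoped BigOperators

/-- `s(n)`: the number of 1's in the binary expansion of `n`. -/
def binDigitSum (n : ℕ) : ℕ := (Nat.digits 2 n).sum

/-- An `r`-tiling sequence with tiles in `S`, recorded as a list of pairs `(b_i, ℓ_i)`:
each `ℓ_i ∈ S`, the `b_i` are weakly increasing, `ℓ_i > ℓ_{i+1}` whenever `b_i = b_{i+1}`,
and `∑ ℓ_i·2^{b_i} = r`. -/
def IsTiling (S : Finset ℕ) (r : ℕ) (L : List (ℕ × ℕ)) : Prop :=
  (∀ p ∈ L, p.2 ∈ S) ∧
  L.Chain' (fun p q => p.1 ≤ q.1 ∧ (p.1 = q.1 → q.2 < p.2)) ∧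
  (L.map fun p => p.2 * 2 ^ p.1).sum = r

/-- `s̃(r,S)`: the minimal length of an `r`-tiling sequence (`⊤` if none exists). -/
noncomputable def stilde (S : Finset ℕ) (r : ℕ) : ℕ∞ :=
  sInf {n : ℕ∞ | ∃ L : List (ℕ × ℕ), IsTiling S r L ∧ (L.length : ℕ∞) = n}

/-- `K̃(r,S)`: the set of `r`-tiling sequences of minimal length. -/
def Ktilde (S : Finset ℕ) (r : ℕ) : Set (List (ℕ × ℕ)) :=
  {L | IsTiling S r L ∧ (L.length : ℕ∞) = stilde S r}

lemma binDigitSum_zero : binDigitSum 0 = 0 := by simp [binDigitSum]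

lemma binDigitSum_eq_mod_add_div (n : ℕ) : binDigitSum n = n % 2 + binDigitSum (n / 2) := by
  rcases Nat.eq_zero_or_pos n with rfl | h
  · simp [binDigitSum]
  · simp [binDigitSum, Nat.digits_def' (b := 2) (by norm_num) h]

lemma binDigitSum_mul_two_pow (n b : ℕ) : binDigitSum (n * 2 ^ b) = binDigitSum n := by
  induction b with
  | zero => simp
  | succ b ih =>
    rw [binDigitSum_eq_mod_add_div, show n * 2 ^ (b + 1) = 2 * (n * 2 ^ b) by ring]
    simp [ih]

lemma binDigitSum_two_pow_sub_one (m : ℕ) : binDigitSum (2 ^ m - 1) = m := by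
  induction m with
  | zero => simp [binDigitSum]
  | succ m ih =>
    have hpos : 0 < 2 ^ m := by positivity
    rw [binDigitSum_eq_mod_add_div, show (2 ^ (m + 1) - 1) % 2 = 1 by omega,
      show (2 ^ (m + 1) - 1) / 2 = 2 ^ m - 1 by omega, ih, add_comm]

lemma two_pow_sub_eight {m : ℕ} (hm : 3 ≤ m) : 2 ^ m - 8 = (2 ^ (m - 3) - 1) * 2 ^ 3 := by
  obtain ⟨n, rfl⟩ := Nat.exists_eq_add_of_le hm
  rw [Nat.add_sub_cancel_left, pow_add, Nat.sub_mul]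
  omega

lemma testBit_two_pow_sub_eight {m : ℕ} (hm : 3 ≤ m) (i : ℕ) :
    (2 ^ m - 8).testBit i ↔ 3 ≤ i ∧ i < m := by
  rw [two_pow_sub_eight hm, Nat.testBit_mul_two_pow, Nat.testBit_two_pow_sub_one]
  simp only [Bool.and_eq_true, decide_eq_true_eq]
  omega

lemma binDigitSum_succ_le (n : ℕ) : binDigitSum (n + 1) ≤ binDigitSum n + 1 := by
  induction n using Nat.strong_induction_on with
  | _ n ih =>
    rw [binDigitSum_eq_mod_add_div (n + 1), binDigitSum_eq_mod_add_div n]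
    rcases Nat.mod_two_eq_zero_or_one n with h | h
    · rw [show (n + 1) / 2 = n / 2 by omega]
      omega
    · have := ih (n / 2) (by omega)
      rw [show (n + 1) / 2 = n / 2 + 1 by omega]
      omega

lemma binDigitSum_add_le (x y : ℕ) : binDigitSum (x + y) ≤ binDigitSum x + binDigitSum y := by
  induction x using Nat.strong_induction_on generalizing y with
  | _ x ih =>
    rcases Nat.eq_zero_or_pos x with rfl | hx
    · simp
    have h := ih (x / 2) (by omega) (y / 2)
    rw [binDigitSum_eq_mod_add_div (x + y), binDigitSum_eq_mod_add_div x,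
      binDigitSum_eq_mod_add_div y]
    by_cases hc : x % 2 = 1 ∧ y % 2 = 1
    · have := binDigitSum_succ_le (x / 2 + y / 2)
      rw [show (x + y) / 2 = x / 2 + y / 2 + 1 by omega]
      omega
    · rw [show (x + y) / 2 = x / 2 + y / 2 by omega]
      omega

/-- When binary digit sums add up, the addition has no carries. -/
lemma testBit_of_binDigitSum_add (x y : ℕ)
    (h : binDigitSum (x + y) = binDigitSum x + binDigitSum y) (i : ℕ) :
    ((x + y).testBit i ↔ x.testBit i ∨ y.testBit i) ∧ ¬(x.testBit i ∧ y.testBit i) := by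
  induction i generalizing x y with
  | zero =>
    rw [binDigitSum_eq_mod_add_div (x + y), binDigitSum_eq_mod_add_div x,
      binDigitSum_eq_mod_add_div y] at h
    have hc : ¬(x % 2 = 1 ∧ y % 2 = 1) := by
      intro hc
      rw [show (x + y) / 2 = x / 2 + y / 2 + 1 by omega] at h
      have := binDigitSum_succ_le (x / 2 + y / 2)
      have := binDigitSum_add_le (x / 2) (y / 2)
      omega
    simp only [Nat.testBit_zero, decide_eq_true_eq]
    omega
  | succ i ih =>
    rw [binDigitSum_eq_mod_add_div (x + y), binDigitSum_eq_mod_add_div x,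
      binDigitSum_eq_mod_add_div y] at h
    have hadd := binDigitSum_add_le (x / 2) (y / 2)
    by_cases hc : x % 2 = 1 ∧ y % 2 = 1
    · rw [show (x + y) / 2 = x / 2 + y / 2 + 1 by omega] at h
      have := binDigitSum_succ_le (x / 2 + y / 2)
      omega
    · rw [show (x + y) / 2 = x / 2 + y / 2 by omega] at h
      simp only [Nat.testBit_succ, show (x + y) / 2 = x / 2 + y / 2 by omega]
      exact ih _ _ (by omega)

lemma binDigitSum_sum_le {X : List ℕ} {c : ℕ} (hX : ∀ x ∈ X, binDigitSum x ≤ c) :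
    binDigitSum X.sum ≤ c * X.length := by
  induction X with
  | nil => simp [binDigitSum_zero]
  | cons a X ih =>
    have h1 := ih fun x hx => hX x (by simp [hx])
    have h2 := hX a (by simp)
    have h3 := binDigitSum_add_le a X.sum
    simp only [List.sum_cons, List.length_cons, mul_add, mul_one]
    omega

/-- If a sum of numbers of digit sum at most `c` has the largest possible digit sum, then all
summands have digit sum `c` and their binary supports partition that of the sum. -/
lemma binDigitSum_sum_eq {X : List ℕ} {c : ℕ} (hX : ∀ x ∈ X, binDigitSum x ≤ c)
    (h : binDigitSum X.sum = c * X.length) :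
    (∀ x ∈ X, binDigitSum x = c) ∧ (∀ i, X.sum.testBit i ↔ ∃ x ∈ X, x.testBit i) ∧
      X.Pairwise fun x y => ∀ i, ¬(x.testBit i ∧ y.testBit i) := by
  induction X with
  | nil => simp
  | cons a X ih =>
    have hX' : ∀ x ∈ X, binDigitSum x ≤ c := fun x hx => hX x (by simp [hx])
    have h1 := binDigitSum_sum_le hX'
    have h2 := hX a (by simp)
    have h3 := binDigitSum_add_le a X.sum
    simp only [List.sum_cons, List.length_cons, mul_add, mul_one] at h
    obtain ⟨hs, hb, hp⟩ := ih hX' (by omega)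
    have hbit := testBit_of_binDigitSum_add a X.sum (by omega)
    refine ⟨?_, ?_, ?_⟩
    · simp only [List.mem_cons, forall_eq_or_imp]
      exact ⟨by omega, hs⟩
    · intro i
      rw [List.sum_cons, (hbit i).1, hb i]
      simp
    · refine List.pairwise_cons.2 ⟨fun y hy i hi => (hbit i).2 ⟨hi.1, (hb i).2 ⟨y, hy, hi.2⟩⟩, hp⟩

lemma getElem?_length_sub_one_of_forall_lt {L : List (ℕ × ℕ)} {p : ℕ × ℕ}
    (hL : L.Pairwise fun p q => p.1 ≤ q.1) (hp : p ∈ L) (h : ∀ q ∈ L, q ≠ p → q.1 < p.1) :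
    L[L.length - 1]? = some p := by
  rw [← List.getLast?_eq_getElem?]
  rcases L.eq_nil_or_concat with rfl | ⟨L', x, rfl⟩
  · simp at hp
  simp only [List.concat_eq_append, List.pairwise_append, List.mem_append, List.mem_singleton,
    List.getLast?_append, List.getLast?_singleton, Option.some_or, Option.some.injEq] at *
  by_contra hx
  have h1 := h x (Or.inr rfl) hx
  rcases hp with hp | rfl
  · have := hL.2.2 p hp x rfl
    omega
  · exact hx rfl

lemma mem_dropLast_iff_of_nodup {L : List (ℕ × ℕ)} {p q : ℕ × ℕ} (hn : L.Nodup)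
    (hp : L[L.length - 1]? = some p) : q ∈ L.dropLast ↔ q ∈ L ∧ q ≠ p := by
  rw [← List.getLast?_eq_getElem?] at hp
  rcases L.eq_nil_or_concat with rfl | ⟨L', x, rfl⟩
  · simp at hp
  simp only [List.concat_eq_append, List.getLast?_append, List.getLast?_singleton,
    Option.some_or, Option.some.injEq] at hp
  subst hp
  simp only [List.concat_eq_append, List.nodup_append, List.mem_singleton, List.dropLast_concat,
    List.mem_append] at *
  constructor
  · exact fun hq => ⟨Or.inl hq, fun e => hn.2.2 q hq x rfl e⟩
  · rintro ⟨hq | hq, hne⟩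
    · exact hq
    · exact absurd hq hne

lemma getElem?_of_getElem?_dropLast {L : List (ℕ × ℕ)} {n : ℕ} {p : ℕ × ℕ}
    (h : L.dropLast[n]? = some p) : L[n]? = some p := by
  rw [List.getElem?_dropLast] at h
  split_ifs at h
  exact h

/-- The binary support of the tile `p`. -/
def tileBits (p : ℕ × ℕ) : Set ℕ := {i | (p.2 * 2 ^ p.1).testBit i}

lemma tileBits_eq_of_binDigitSum {p : ℕ × ℕ}
    (hp : p.2 ∈ ({1, 3, 5, 7, 9, 11, 13, 19} : Finset ℕ)) (hs : binDigitSum p.2 = 3) :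
    ∃ b, p = (b, 7) ∧ tileBits p = {b, b + 1, b + 2} ∨
      p = (b, 11) ∧ tileBits p = {b, b + 1, b + 3} ∨
      p = (b, 13) ∧ tileBits p = {b, b + 2, b + 3} ∨
      p = (b, 19) ∧ tileBits p = {b, b + 1, b + 4} := by
  obtain ⟨b, l⟩ := p
  have key : ∀ (i : ℕ), i ∈ tileBits (b, l) ↔ b ≤ i ∧ l.testBit (i - b) := by
    intro i
    simp [tileBits, Nat.testBit_mul_two_pow]
  have big : ∀ j, l.testBit j → j < 5 := by
    intro j hj
    by_contra hlt
    have : 2 ^ 5 ≤ 2 ^ j := Nat.pow_le_pow_right (by norm_num) (by omega)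
    rw [Nat.testBit_lt_two_pow] at hj
    · simp at hj
    · simp at hp
      omega
  refine ⟨b, ?_⟩
  have hl : l = 7 ∨ l = 11 ∨ l = 13 ∨ l = 19 := by
    simp only [Finset.mem_insert, Finset.mem_singleton] at hp
    rcases hp with rfl | rfl | rfl | rfl | rfl | rfl | rfl | rfl <;> simp [binDigitSum] at hs ⊢
  have aux : ∀ T : Set ℕ, (∀ i ∈ T, b ≤ i ∧ i < b + 5) →
      (∀ j < 5, b + j ∈ T ↔ l.testBit j) → tileBits (b, l) = T := by
    intro T h1 h2
    ext i
    rw [key]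
    constructor
    · rintro ⟨hb, hi⟩
      have := (h2 _ (big _ hi)).2 hi
      rwa [Nat.add_sub_cancel' hb] at this
    · intro hi
      obtain ⟨hb, hlt⟩ := h1 i hi
      refine ⟨hb, (h2 _ (by omega)).1 ?_⟩
      rwa [Nat.add_sub_cancel' hb]
  rcases hl with rfl | rfl | rfl | rfl
  · refine Or.inl ⟨rfl, aux _ ?_ ?_⟩
    · simp
    · intro j hj; interval_cases j <;> simp [Nat.testBit]
  · refine Or.inr (Or.inl ⟨rfl, aux _ ?_ ?_⟩)
    · simp
    · intro j hj; interval_cases j <;> simp [Nat.testBit]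
  · refine Or.inr (Or.inr (Or.inl ⟨rfl, aux _ ?_ ?_⟩))
    · simp
    · intro j hj; interval_cases j <;> simp [Nat.testBit]
  · refine Or.inr (Or.inr (Or.inr ⟨rfl, aux _ ?_ ?_⟩))
    · simp
    · intro j hj; interval_cases j <;> simp [Nat.testBit]

/-- The possible top tiles in a partition of `[3, m)` into binary supports of tiles. -/
lemma exists_top_tiles {L : List (ℕ × ℕ)} {m : ℕ} (hm : 6 ≤ m)
    (hT : ∀ p ∈ L, ∃ b, p = (b, 7) ∧ tileBits p = {b, b + 1, b + 2} ∨
      p = (b, 11) ∧ tileBits p = {b, b + 1, b + 3} ∨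
      p = (b, 13) ∧ tileBits p = {b, b + 2, b + 3} ∨
      p = (b, 19) ∧ tileBits p = {b, b + 1, b + 4})
    (hc : ∀ i, (∃ p ∈ L, i ∈ tileBits p) ↔ 3 ≤ i ∧ i < m)
    (hd : ∀ p ∈ L, ∀ q ∈ L, ∀ i, i ∈ tileBits p → i ∈ tileBits q → p = q) :
    (∃ b, m = b + 3 ∧ (b, 7) ∈ L ∧ ∀ q ∈ L, q ≠ (b, 7) → q.1 < b) ∨
    (∃ b, m = b + 6 ∧ (b + 2, 13) ∈ L ∧ (b, 11) ∈ L ∧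
      ∀ q ∈ L, q ≠ (b + 2, 13) → q ≠ (b, 11) → q.1 < b) ∨
    (∃ b, m = b + 6 ∧ (b + 2, 11) ∈ L ∧ (b, 19) ∈ L ∧
      ∀ q ∈ L, q ≠ (b + 2, 11) → q ≠ (b, 19) → q.1 < b) ∨
    (∃ b, m = b + 9 ∧ (b + 5, 13) ∈ L ∧ (b + 2, 19) ∈ L ∧ (b, 19) ∈ L ∧
      ∀ q ∈ L, q ≠ (b + 5, 13) → q ≠ (b + 2, 19) → q ≠ (b, 19) → q.1 < b) := by
  have hr : ∀ p ∈ L, ∀ i ∈ tileBits p, 3 ≤ i ∧ i < m := fun p hp i hi => (hc i).1 ⟨p, hp, hi⟩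
  have hself : ∀ p ∈ L, p.1 ∈ tileBits p := by
    intro p hp
    obtain ⟨b, ⟨rfl, h⟩ | ⟨rfl, h⟩ | ⟨rfl, h⟩ | ⟨rfl, h⟩⟩ := hT p hp <;> simp [h]
  have hdis : ∀ p ∈ L, ∀ q ∈ L, ∀ j, j ∉ tileBits p → j ∈ tileBits q →
      ∀ i ∈ tileBits p, i ∉ tileBits q := by
    intro p hp q hq j hjp hjq i hip hiq
    exact hjp (hd p hp q hq i hip hiq ▸ hjq)
  obtain ⟨p, hp, hpt⟩ := (hc (m - 1)).2 (by omega)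
  have hpr := hr p hp
  obtain ⟨b, ⟨rfl, h⟩ | ⟨rfl, h⟩ | ⟨rfl, h⟩ | ⟨rfl, h⟩⟩ := hT p hp <;>
    simp only [h, Set.mem_insert_iff, Set.mem_singleton_iff, forall_eq_or_imp, forall_eq]
      at hpt hpr
  · refine Or.inl ⟨b, by omega, hp, fun q hq hne => ?_⟩
    by_contra hlt
    have := hr q hq _ (hself q hq)
    exact hne (hd q hq _ hp q.1 (hself q hq) (by simp [h]; omega))
  · obtain ⟨q, hq, hqt⟩ := (hc (b + 2)).2 (by omega)
    have hqr := hr q hq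
    have hqd := hdis _ hp q hq (b + 2) (by simp [h]) hqt
    obtain ⟨c, ⟨rfl, h'⟩ | ⟨rfl, h'⟩ | ⟨rfl, h'⟩ | ⟨rfl, h'⟩⟩ := hT q hq <;>
      simp only [h, h', Set.mem_insert_iff, Set.mem_singleton_iff, forall_eq_or_imp, forall_eq]
        at hqt hqr hqd <;> try omega
    obtain rfl : b = c + 2 := by omega
    refine Or.inr (Or.inr (Or.inl ⟨c, by omega, hp, hq, fun x hx hxp hxq => ?_⟩))
    by_contra hlt
    have := hr x hx _ (hself x hx)
    have h1 : x.1 ∉ tileBits _ := fun hi => hxp (hd x hx _ hp x.1 (hself x hx) hi)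
    have h2 : x.1 ∉ tileBits _ := fun hi => hxq (hd x hx _ hq x.1 (hself x hx) hi)
    simp only [h, h', Set.mem_insert_iff, Set.mem_singleton_iff] at h1 h2
    omega
  · obtain ⟨q, hq, hqt⟩ := (hc (b + 1)).2 (by omega)
    have hqr := hr q hq
    have hqd := hdis _ hp q hq (b + 1) (by simp [h]) hqt
    obtain ⟨c, ⟨rfl, h'⟩ | ⟨rfl, h'⟩ | ⟨rfl, h'⟩ | ⟨rfl, h'⟩⟩ := hT q hq <;>
      simp only [h, h', Set.mem_insert_iff, Set.mem_singleton_iff, forall_eq_or_imp, forall_eq]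
        at hqt hqr hqd <;> try omega
    · obtain rfl : b = c + 2 := by omega
      refine Or.inr (Or.inl ⟨c, by omega, hp, hq, fun x hx hxp hxq => ?_⟩)
      by_contra hlt
      have := hr x hx _ (hself x hx)
      have h1 : x.1 ∉ tileBits _ := fun hi => hxp (hd x hx _ hp x.1 (hself x hx) hi)
      have h2 : x.1 ∉ tileBits _ := fun hi => hxq (hd x hx _ hq x.1 (hself x hx) hi)
      simp only [h, h', Set.mem_insert_iff, Set.mem_singleton_iff] at h1 h2
      omega
    · obtain rfl : b = c + 3 := by omega
      obtain ⟨t, ht, htt⟩ := (hc (c + 2)).2 (by omega)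
      have htr := hr t ht
      have htp := hdis _ hp t ht (c + 2) (by simp [h]) htt
      have htq := hdis _ hq t ht (c + 2) (by simp [h']) htt
      obtain ⟨d, ⟨rfl, h''⟩ | ⟨rfl, h''⟩ | ⟨rfl, h''⟩ | ⟨rfl, h''⟩⟩ := hT t ht <;>
        simp only [h, h', h'', Set.mem_insert_iff, Set.mem_singleton_iff, forall_eq_or_imp,
          forall_eq] at htt htr htp htq <;> try omega
      obtain rfl : c = d + 2 := by omega
      refine Or.inr (Or.inr (Or.inr ⟨d, by omega, hp, hq, ht, fun x hx hxp hxq hxt => ?_⟩))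
      by_contra hlt
      have := hr x hx _ (hself x hx)
      have h1 : x.1 ∉ tileBits _ := fun hi => hxp (hd x hx _ hp x.1 (hself x hx) hi)
      have h2 : x.1 ∉ tileBits _ := fun hi => hxq (hd x hx _ hq x.1 (hself x hx) hi)
      have h3 : x.1 ∉ tileBits _ := fun hi => hxt (hd x hx _ ht x.1 (hself x hx) hi)
      simp only [h, h', h'', Set.mem_insert_iff, Set.mem_singleton_iff] at h1 h2 h3
      omega
  · obtain ⟨q, hq, hqt⟩ := (hc (b + 3)).2 (by omega)
    have hqr := hr q hq
    have hqd := hdis _ hp q hq (b + 3) (by simp [h]) hqt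
    obtain ⟨c, ⟨rfl, h'⟩ | ⟨rfl, h'⟩ | ⟨rfl, h'⟩ | ⟨rfl, h'⟩⟩ := hT q hq <;>
      simp only [h, h', Set.mem_insert_iff, Set.mem_singleton_iff, forall_eq_or_imp, forall_eq]
        at hqt hqr hqd <;> omega

lemma binDigitSum_tile_le {p : ℕ × ℕ} (hp : p.2 ∈ ({1, 3, 5, 7, 9, 11, 13, 19} : Finset ℕ)) :
    binDigitSum (p.2 * 2 ^ p.1) ≤ 3 := by
  rw [binDigitSum_mul_two_pow]
  simp only [Finset.mem_insert, Finset.mem_singleton] at hp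
  rcases hp with h | h | h | h | h | h | h | h <;> simp [h, binDigitSum]

lemma le_length_of_isTiling {m : ℕ} (hm : 3 ≤ m) {L : List (ℕ × ℕ)}
    (hL : IsTiling {1, 3, 5, 7, 9, 11, 13, 19} (2 ^ m - 8) L) : m - 3 ≤ 3 * L.length := by
  have h := binDigitSum_sum_le (X := L.map fun p => p.2 * 2 ^ p.1) (c := 3) (by
    simp only [List.mem_map]
    rintro _ ⟨p, hp, rfl⟩
    exact binDigitSum_tile_le (hL.1 p hp))
  rwa [hL.2.2, List.length_map, two_pow_sub_eight hm, binDigitSum_mul_two_pow,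
    binDigitSum_two_pow_sub_one] at h

lemma top_tiles_of_isTiling {m : ℕ} (hm : 6 ≤ m) {L : List (ℕ × ℕ)}
    (hL : IsTiling {1, 3, 5, 7, 9, 11, 13, 19} (2 ^ m - 8) L) (hlen : 3 * L.length = m - 3) :
    L[L.length - 1]? = some (m - 3, 7) ∨
    (L[L.length - 1]? = some (m - 4, 13) ∧ L[L.length - 2]? = some (m - 6, 11)) ∨
    (L[L.length - 1]? = some (m - 4, 11) ∧ L[L.length - 2]? = some (m - 6, 19)) ∨
    (L[L.length - 1]? = some (m - 4, 13) ∧ L[L.length - 2]? = some (m - 7, 19) ∧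
      L[L.length - 3]? = some (m - 9, 19)) := by
  obtain ⟨hS, hchain, hsum⟩ := hL
  obtain ⟨hs, hbits, hpw⟩ := binDigitSum_sum_eq (X := L.map fun p => p.2 * 2 ^ p.1) (c := 3) (by
    simp only [List.mem_map]
    rintro _ ⟨p, hp, rfl⟩
    exact binDigitSum_tile_le (hS p hp)) (by
    rw [hsum, List.length_map, two_pow_sub_eight (by omega), binDigitSum_mul_two_pow,
      binDigitSum_two_pow_sub_one, hlen])
  have hT := fun p hp => tileBits_eq_of_binDigitSum (hS p hp) (by
    rw [← binDigitSum_mul_two_pow p.2 p.1]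
    exact hs _ (List.mem_map_of_mem hp))
  have hne : ∀ p ∈ L, ∃ i, i ∈ tileBits p := by
    intro p hp
    obtain ⟨b, ⟨-, h⟩ | ⟨-, h⟩ | ⟨-, h⟩ | ⟨-, h⟩⟩ := hT p hp <;> exact ⟨b, by simp [h]⟩
  have hc : ∀ i, (∃ p ∈ L, i ∈ tileBits p) ↔ 3 ≤ i ∧ i < m := by
    intro i
    rw [← testBit_two_pow_sub_eight (by omega), ← hsum, hbits]
    simp [tileBits]
  rw [List.pairwise_map] at hpw
  have hd : ∀ p ∈ L, ∀ q ∈ L, ∀ i, i ∈ tileBits p → i ∈ tileBits q → p = q := by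
    intro p hp q hq i hip hiq
    by_contra hpq
    have : Std.Symm fun x y : ℕ × ℕ =>
        ∀ i, ¬((x.2 * 2 ^ x.1).testBit i ∧ (y.2 * 2 ^ y.1).testBit i) :=
      ⟨fun x y h i hi => h i hi.symm⟩
    exact hpw.forall hp hq hpq i ⟨hip, hiq⟩
  have hnodup : L.Nodup := by
    refine hpw.imp_of_mem fun {p q} hp _ h hpq => ?_
    obtain ⟨i, hi⟩ := hne p hp
    exact h i ⟨hi, hpq ▸ hi⟩
  have hsort : L.Pairwise fun p q => p.1 ≤ q.1 := by
    have : IsTrans (ℕ × ℕ) fun p q => p.1 ≤ q.1 := ⟨fun _ _ _ => le_trans⟩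
    exact List.isChain_iff_pairwise.1 (hchain.imp fun _ _ h => h.1)
  have step : ∀ {M : List (ℕ × ℕ)} {p : ℕ × ℕ}, M.Nodup → M.Pairwise (fun p q => p.1 ≤ q.1) →
      p ∈ M → (∀ q ∈ M, q ≠ p → q.1 < p.1) → M[M.length - 1]? = some p ∧
      M.dropLast.Nodup ∧ M.dropLast.Pairwise (fun p q => p.1 ≤ q.1) ∧
      ∀ q, q ∈ M.dropLast ↔ q ∈ M ∧ q ≠ p := by
    intro M p hn hM hp h
    have hlast := getElem?_length_sub_one_of_forall_lt hM hp h
    exact ⟨hlast, hn.sublist M.dropLast_sublist, hM.sublist M.dropLast_sublist,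
      fun q => mem_dropLast_iff_of_nodup hn hlast⟩
  have two : ∀ {M : List (ℕ × ℕ)} {p q : ℕ × ℕ}, M.Nodup → M.Pairwise (fun p q => p.1 ≤ q.1) →
      p ∈ M → q ∈ M → q.1 < p.1 → (∀ x ∈ M, x ≠ p → x ≠ q → x.1 < q.1) →
      M[M.length - 1]? = some p ∧ M[M.length - 2]? = some q := by
    intro M p q hn hM hp hq hpq h
    obtain ⟨h1, hn', hM', hmem⟩ := step hn hM hp fun x hx hxp => by
      rcases eq_or_ne x q with rfl | hxq
      · exact hpq
      · exact (h x hx hxp hxq).trans hpq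
    have h2 := (step hn' hM' ((hmem q).2 ⟨hq, by rintro rfl; omega⟩) fun x hx hxq =>
      h x ((hmem x).1 hx).1 ((hmem x).1 hx).2 hxq).1
    rw [List.length_dropLast] at h2
    exact ⟨h1, getElem?_of_getElem?_dropLast h2⟩
  obtain ⟨b, rfl, hp, h⟩ | ⟨b, rfl, hp, hq, h⟩ | ⟨b, rfl, hp, hq, h⟩ | ⟨b, rfl, hp, hq, ht, h⟩ :=
    exists_top_tiles hm hT hc hd
  · exact Or.inl (step hnodup hsort hp h).1
  · exact Or.inr (Or.inl (two hnodup hsort hp hq (by simp) h))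
  · exact Or.inr (Or.inr (Or.inl (two hnodup hsort hp hq (by simp) h)))
  · obtain ⟨h1, hn, hs', hmem⟩ := step hnodup hsort hp fun x hx hxp => by
      rcases eq_or_ne x (b + 2, 19) with rfl | hxq
      · simp
      rcases eq_or_ne x (b, 19) with rfl | hxt
      · simp
      have := h x hx hxp hxq hxt
      simp only
      omega
    obtain ⟨h2, h3⟩ := two hn hs' ((hmem _).2 ⟨hq, by simp⟩) ((hmem _).2 ⟨ht, by simp⟩) (by simp)
      fun x hx => h x ((hmem x).1 hx).1 ((hmem x).1 hx).2
    rw [List.length_dropLast] at h2 h3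
    exact Or.inr (Or.inr (Or.inr
      ⟨h1, getElem?_of_getElem?_dropLast h2, getElem?_of_getElem?_dropLast h3⟩))

theorem stmt12 (k : ℕ) (hk : k ≤ 7) :
    stilde {1, 3, 5, 7, 9, 11, 13, 19} (2 ^ (27 - 3 * k) - 8) = ((8 - k : ℕ) : ℕ∞) ∧
    ∀ L : List (ℕ × ℕ),
      IsTiling {1, 3, 5, 7, 9, 11, 13, 19} (2 ^ (27 - 3 * k) - 8) L →
      L.length = 8 - k →
        L[7 - k]? = some (24 - 3 * k, 7) ∨
        (L[7 - k]? = some (23 - 3 * k, 13) ∧ L[6 - k]? = some (21 - 3 * k, 11)) ∨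
        (L[7 - k]? = some (23 - 3 * k, 11) ∧ L[6 - k]? = some (21 - 3 * k, 19)) ∨
        (L[7 - k]? = some (23 - 3 * k, 13) ∧ L[6 - k]? = some (20 - 3 * k, 19) ∧
          L[5 - k]? = some (18 - 3 * k, 19)) := by
  constructor
  · apply le_antisymm
    · refine sInf_le ⟨(List.range (8 - k)).map fun i => (3 + 3 * i, 7), ⟨?_, ?_, ?_⟩, by simp⟩
      · simp
      · change List.IsChain _ _
        interval_cases k <;> simp [List.range_succ]
      · interval_cases k <;> decide
    · refine le_sInf ?_
      rintro _ ⟨L, hL, rfl⟩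
      have := le_length_of_isTiling (by omega) hL
      exact_mod_cast (show 8 - k ≤ L.length by omega)
  · intro L hL hlen
    have h := top_tiles_of_isTiling (by omega) hL (by omega)
    rw [hlen, show 8 - k - 1 = 7 - k by omega, show 8 - k - 2 = 6 - k by omega,
      show 8 - k - 3 = 5 - k by omega, show 27 - 3 * k - 3 = 24 - 3 * k by omega,
      show 27 - 3 * k - 4 = 23 - 3 * k by omega, show 27 - 3 * k - 6 = 21 - 3 * k by omega,
      show 27 - 3 * k - 7 = 20 - 3 * k by omega, show 27 - 3 * k - 9 = 18 - 3 * k by omega] at h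
    exact h
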